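/- Assume q ≡ 3 (mod 4). Let p and r be distinct internal points such that the line through p and r is a passant. Then |U_{p,I∖N(r)} ∩ C| is even for each of the following class sets C: C = {1}; C = [4]; C = [θ] for any nonzero square θ ≠ 4 with θ-4 a nonzero square; C = [π] for any nonzero square π ≠ 4 with π-4 a nonsquare. -/

import Mathlib

/-!
Write `ℓ` for the passant line through `p` and `r`. Since `q ≡ 3 (mod 4)`, the half-turn `R` of the
plane about the pole of `ℓ` belongs to `H`: it satisfies `R ^ 2 = 1`, fixes `ℓ` as a functional, and
acts as `-1` on the vectors of `ℓ`; in particular it fixes the points `p` and `r`. Hence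
`M ↦ R * M * R` is an involution of `U_{p, I ∖ N(r)} ∩ C` for every class set `C`.

It has no fixed points. If `M` commutes with `R`, then `p·M` is again a `-1`-eigenvector of `R`, and
so lies on `ℓ`; as `ℓ` is a passant through `r`, the point `p·M` is then in `N(r)`. Therefore the
cardinality is even.
-/

open scoped Classical

noncomputable section

namespace ConicPaper

variable (K : Type) [Field K] [Fintype K]

/-- Points (and also lines, via homogeneous coordinates) of `PG(2,q)`. -/
abbrev Pt := Projectivization K (Fin 3 → K)

instance : Fintype (Pt K) := @Fintype.ofFinite _ (Quotient.finite _)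

/-- `a` is a nonsquare in `K`. -/
def Nonsq (a : K) : Prop := ¬ IsSquare a

/-- The quadratic form `Q(x0,x1,x2) = x1^2 - x0*x2` defining the conic. -/
def Qf (v : Fin 3 → K) : K := v 1 ^ 2 - v 0 * v 2

/-- A point is internal when `Q` of (a representative of) it is a nonsquare. -/
def Internal (p : Pt K) : Prop := Nonsq K (Qf K p.rep)

/-- A point is external when `Q` of it is a nonzero square. -/
def External (p : Pt K) : Prop := Qf K p.rep ≠ 0 ∧ IsSquare (Qf K p.rep)

/-- The point `p` lies on the line `ℓ = [b0,b1,b2]`. -/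
def OnL (p ℓ : Pt K) : Prop :=
  p.rep 0 * ℓ.rep 0 + p.rep 1 * ℓ.rep 1 + p.rep 2 * ℓ.rep 2 = 0

/-- Discriminant `b1^2 - 4 b0 b2` of a line. -/
def lineDisc (ℓ : Pt K) : K := ℓ.rep 1 ^ 2 - 4 * ℓ.rep 0 * ℓ.rep 2

/-- A line is a passant when its discriminant is a nonsquare. -/
def Passant (ℓ : Pt K) : Prop := Nonsq K (lineDisc K ℓ)

/-- A line is a secant when its discriminant is a nonzero square. -/
def Secant (ℓ : Pt K) : Prop := lineDisc K ℓ ≠ 0 ∧ IsSquare (lineDisc K ℓ)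

/-- The incidence pairing of the vector `w` with the polar line
`p^⊥ = [z, -2y, x]` of the point `p = (x,y,z)`. -/
def perpDot (p : Pt K) (w : Fin 3 → K) : K :=
  w 0 * p.rep 2 + w 1 * (-2 * p.rep 1) + w 2 * p.rep 0

/-- The point `r` lies on the passant line `p^⊥`. -/
def OnPerp (p r : Pt K) : Prop := perpDot K p r.rep = 0

/-- The (finite) set `I` of internal points, as a type. -/
abbrev Ipts := {p : Pt K // Internal K p}

instance : Fintype (Ipts K) := Fintype.ofFinite _

/-- `N(p)`: the internal points lying on at least one passant line through `p`;
`p` itself is excluded when `q ≡ 1 (mod 4)` and included when `q ≡ 3 (mod 4)`. -/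
def NbhdSet (p : Pt K) : Set (Pt K) :=
  if Fintype.card K % 4 = 1 then
    {r | Internal K r ∧ r ≠ p ∧ ∃ ℓ, Passant K ℓ ∧ OnL K p ℓ ∧ OnL K r ℓ}
  else
    {r | Internal K r ∧ ∃ ℓ, Passant K ℓ ∧ OnL K p ℓ ∧ OnL K r ℓ}

/-- The line through `p` and `r` is a passant. -/
def PassantThru (p r : Pt K) : Prop := ∃ ℓ, OnL K p ℓ ∧ OnL K r ℓ ∧ Passant K ℓ

/-- The line through `p` and `r` is a secant. -/
def SecantThru (p r : Pt K) : Prop := ∃ ℓ, OnL K p ℓ ∧ OnL K r ℓ ∧ Secant K ℓ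

/-- The action of a (nonsingular) matrix `M` on points of `PG(2,q)`:
`p ↦ p·M`.  (If `p.rep ᵥ* M` were zero -- impossible for invertible `M` --
we return `p`, making the function total.) -/
def actPt (M : Matrix (Fin 3) (Fin 3) K) (p : Pt K) : Pt K :=
  if h : Matrix.vecMul p.rep M ≠ 0 then Projectivization.mk K (Matrix.vecMul p.rep M) h else p

/-- The group `H ≅ PSL(2,q)`, given by its set of matrix representatives. -/
def Hset : Set (Matrix (Fin 3) (Fin 3) K) :=
  {M | ∃ a b c d : K, a * d - b * c = 1 ∧
    M = !![a^2, a*b, b^2; 2*a*c, a*d + b*c, 2*b*d; c^2, c*d, d^2]}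

/-- The class set `{g ∈ H : T(g) = tr(g) + 1 = s}` for `s ∈ F_q`. -/
def classOf (s : K) : Set (Matrix (Fin 3) (Fin 3) K) :=
  {g | g ∈ Hset K ∧ Matrix.trace g + 1 = s}

/-- The class set `[4] = {g ∈ H : T(g) = 4, g ≠ 1}`. -/
def class4 : Set (Matrix (Fin 3) (Fin 3) K) :=
  {g | g ∈ Hset K ∧ Matrix.trace g + 1 = 4 ∧ g ≠ 1}

/-- `U_{p,W} = {h ∈ H : p^h ∈ W}`. -/
def Uset (p : Pt K) (W : Set (Pt K)) : Set (Matrix (Fin 3) (Fin 3) K) :=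
  {M | M ∈ Hset K ∧ actPt K M p ∈ W}

open Matrix

set_option linter.unusedSectionVars false

/-- The discriminant of a vector of line coordinates. -/
def disc (l : Fin 3 → K) : K := l 1 ^ 2 - 4 * l 0 * l 2

/-- The action on the plane of the `2 × 2` matrix with rows `(a, b)` and `(c, d)`. -/
def symSq (a b c d : K) : Matrix (Fin 3) (Fin 3) K :=
  !![a^2, a*b, b^2; 2*a*c, a*d + b*c, 2*b*d; c^2, c*d, d^2]

/-- The half-turn about the pole of the line `l`, where `t ^ 2 = - disc l`. -/
def halfTurn (l : Fin 3 → K) (t : K) : Matrix (Fin 3) (Fin 3) K :=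
  symSq K (l 1 / t) (-2 * l 0 / t) (2 * l 2 / t) (-l 1 / t)

variable {K}

lemma symSq_mul (a b c d a' b' c' d' : K) :
    symSq K a b c d * symSq K a' b' c' d' =
      symSq K (a * a' + b * c') (a * b' + b * d') (c * a' + d * c') (c * b' + d * d') := by
  ext i j
  fin_cases i <;> fin_cases j <;> simp [symSq, Matrix.mul_apply, Fin.sum_univ_three] <;> ring

lemma Hset_mul {M N : Matrix (Fin 3) (Fin 3) K} (hM : M ∈ Hset K) (hN : N ∈ Hset K) :
    M * N ∈ Hset K := by
  obtain ⟨a, b, c, d, h, rfl⟩ := hM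
  obtain ⟨a', b', c', d', h', rfl⟩ := hN
  refine ⟨_, _, _, _, ?_, symSq_mul a b c d a' b' c' d'⟩
  linear_combination (a' * d' - b' * c') * h + h'

lemma Qf_vecMul {M : Matrix (Fin 3) (Fin 3) K} (hM : M ∈ Hset K) (v : Fin 3 → K) :
    Qf K (v ᵥ* M) = Qf K v := by
  obtain ⟨a, b, c, d, h, rfl⟩ := hM
  simp only [Qf, Matrix.vecMul, dotProduct, Fin.sum_univ_three]
  simp
  linear_combination (v 1 ^ 2 - v 0 * v 2) * (a * d - b * c + 1) * h

lemma disc_mulVec {M : Matrix (Fin 3) (Fin 3) K} (hM : M ∈ Hset K) (l : Fin 3 → K) :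
    disc K (M *ᵥ l) = disc K l := by
  obtain ⟨a, b, c, d, h, rfl⟩ := hM
  simp only [disc, Matrix.mulVec, dotProduct, Fin.sum_univ_three]
  simp
  linear_combination (l 1 ^ 2 - 4 * l 0 * l 2) * (a * d - b * c + 1) * h

section halfTurn

variable {l : Fin 3 → K} {t : K}

lemma halfTurn_mem (ht : t ≠ 0) (h : t ^ 2 = -disc K l) : halfTurn K l t ∈ Hset K := by
  refine ⟨_, _, _, _, ?_, rfl⟩
  field_simp
  simp only [disc] at h
  linear_combination -h

lemma halfTurn_mul_self (ht : t ≠ 0) (h : t ^ 2 = -disc K l) :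
    halfTurn K l t * halfTurn K l t = 1 := by
  simp only [disc] at h
  have h1 : l 1 / t * (l 1 / t) + -2 * l 0 / t * (2 * l 2 / t) = -1 := by
    field_simp; linear_combination h
  have h2 : l 1 / t * (-2 * l 0 / t) + -2 * l 0 / t * (-l 1 / t) = 0 := by
    field_simp; ring
  have h3 : 2 * l 2 / t * (l 1 / t) + -l 1 / t * (2 * l 2 / t) = 0 := by
    field_simp; ring
  have h4 : 2 * l 2 / t * (-2 * l 0 / t) + -l 1 / t * (-l 1 / t) = -1 := by
    field_simp; linear_combination h
  rw [halfTurn, symSq_mul, h1, h2, h3, h4]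
  ext i j
  fin_cases i <;> fin_cases j <;> simp [symSq]

lemma halfTurn_mulVec (ht : t ≠ 0) (h : t ^ 2 = -disc K l) : halfTurn K l t *ᵥ l = l := by
  simp only [disc] at h
  ext i
  fin_cases i <;> simp [halfTurn, symSq, Matrix.mulVec, dotProduct, Fin.sum_univ_three] <;>
    field_simp <;> rw [h] <;> ring

lemma vecMul_halfTurn (ht : t ≠ 0) (h : t ^ 2 = -disc K l) {v : Fin 3 → K} (hv : v ⬝ᵥ l = 0) :
    v ᵥ* halfTurn K l t = -v := by
  simp only [disc] at h
  simp only [dotProduct, Fin.sum_univ_three] at hv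
  ext i
  fin_cases i <;> simp [halfTurn, symSq, Matrix.vecMul, dotProduct, Fin.sum_univ_three] <;>
    field_simp <;> rw [h]
  · linear_combination (4 * l 2) * hv
  · linear_combination (-2 * l 1) * hv
  · linear_combination (4 * l 0) * hv

end halfTurn

lemma Nonsq.ne_zero {a : K} (h : Nonsq K a) : a ≠ 0 := by
  rintro rfl
  exact h (IsSquare.zero)

lemma nonsq_sq_mul {a c : K} (hc : c ≠ 0) : Nonsq K (c ^ 2 * a) ↔ Nonsq K a := by
  refine not_congr ⟨?_, ?_⟩
  · rintro ⟨x, hx⟩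
    exact ⟨x / c, by field_simp; linear_combination hx⟩
  · rintro ⟨x, rfl⟩
    exact ⟨c * x, by ring⟩

lemma rep_mk_smul {v : Fin 3 → K} (hv : v ≠ 0) :
    ∃ c : K, c ≠ 0 ∧ (Projectivization.mk K v hv).rep = c • v := by
  obtain ⟨c, hc⟩ := Projectivization.exists_smul_eq_mk_rep K v hv
  exact ⟨c, c.ne_zero, hc.symm⟩

lemma OnL_iff (p l : Pt K) : OnL K p l ↔ p.rep ⬝ᵥ l.rep = 0 := by
  simp [OnL, dotProduct, Fin.sum_univ_three]

lemma rep_actPt {M : Matrix (Fin 3) (Fin 3) K} (hM : M ∈ Hset K) {p : Pt K}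
    (hp : Internal K p) : ∃ c : K, c ≠ 0 ∧ (actPt K M p).rep = c • (p.rep ᵥ* M) := by
  have h0 : p.rep ᵥ* M ≠ 0 := by
    intro h
    have h1 := Qf_vecMul hM p.rep
    rw [h] at h1
    exact hp.ne_zero (by rw [← h1]; simp [Qf])
  rw [actPt, dif_pos h0]
  exact rep_mk_smul h0

lemma internal_actPt {M : Matrix (Fin 3) (Fin 3) K} (hM : M ∈ Hset K) {p : Pt K}
    (hp : Internal K p) : Internal K (actPt K M p) := by
  obtain ⟨c, hc, h⟩ := rep_actPt hM hp
  have h1 : Qf K (actPt K M p).rep = c ^ 2 * Qf K p.rep := by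
    rw [← Qf_vecMul hM p.rep, h]; simp [Qf]; ring
  rw [Internal, h1, nonsq_sq_mul hc]
  exact hp

/-- Membership of `p^M` in `I ∖ N(r)`, in terms of vectors of line coordinates. -/
lemma actPt_mem_iff (h3 : Fintype.card K % 4 = 3)
    {M : Matrix (Fin 3) (Fin 3) K} (hM : M ∈ Hset K) {p : Pt K} (hp : Internal K p) (r : Pt K) :
    actPt K M p ∈ {u | Internal K u} \ NbhdSet K r ↔
      ¬ ∃ l : Fin 3 → K, Nonsq K (disc K l) ∧ r.rep ⬝ᵥ l = 0 ∧ (p.rep ᵥ* M) ⬝ᵥ l = 0 := by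
  obtain ⟨c, hc, h⟩ := rep_actPt hM hp
  have hi := internal_actPt hM hp
  have h31 : ¬ Fintype.card K % 4 = 1 := by omega
  simp only [NbhdSet, if_neg h31, Set.mem_sdiff, Set.mem_ofPred_eq, hi, true_and, OnL_iff, h,
    smul_dotProduct, smul_eq_mul, mul_eq_zero, hc, false_or]
  refine not_congr ⟨?_, ?_⟩
  · rintro ⟨l, h1, h2, h3⟩
    exact ⟨l.rep, h1, h2, h3⟩
  · rintro ⟨l, h1, h2, h3⟩
    have h0 : l ≠ 0 := by
      rintro rfl
      exact h1.ne_zero (by simp [disc])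
    obtain ⟨e, he, hl⟩ := rep_mk_smul h0
    refine ⟨Projectivization.mk K l h0, ?_, ?_, ?_⟩
    · have : lineDisc K (Projectivization.mk K l h0) = e ^ 2 * disc K l := by
        rw [lineDisc, hl]; simp [disc]; ring
      rw [Passant, this, nonsq_sq_mul he]
      exact h1
    · rw [hl, dotProduct_smul, h2, smul_zero]
    · rw [hl, dotProduct_smul, h3, smul_zero]

lemma even_ncard_of_involution {α : Type*} {S : Set α} (hS : S.Finite) (f : α → α)
    (hf : ∀ x ∈ S, f x ∈ S) (hff : ∀ x ∈ S, f (f x) = x) (hne : ∀ x ∈ S, f x ≠ x) :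
    Even S.ncard := by
  rw [Set.ncard_eq_toFinset_card S hS, ← ZMod.natCast_eq_zero_iff_even]
  have := Finset.sum_involution (s := hS.toFinset) (f := fun _ => (1 : ZMod 2))
    (fun x _ => f x) (fun _ _ => by decide) (fun x hx _ => hne x (by simpa using hx))
    (fun x hx => by simpa using hf x (by simpa using hx))
    (fun x hx => hff x (by simpa using hx))
  simpa using this

lemma exists_sq_eq_neg (h3 : Fintype.card K % 4 = 3) {a : K} (ha : Nonsq K a) :
    ∃ t : K, t ≠ 0 ∧ t ^ 2 = -a := by
  have h1 : ¬ IsSquare (-1 : K) := by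
    rw [FiniteField.isSquare_neg_one_iff]; simpa using h3
  have h2 : IsSquare (-a) := by
    rw [← quadraticChar_one_iff_isSquare (neg_ne_zero.mpr ha.ne_zero), neg_eq_neg_one_mul, map_mul,
      quadraticChar_neg_one_iff_not_isSquare.mpr h1,
      quadraticChar_neg_one_iff_not_isSquare.mpr ha]
    norm_num
  obtain ⟨t, ht⟩ := h2
  refine ⟨t, ?_, by rw [ht, sq]⟩
  rintro rfl
  exact ha.ne_zero (by simpa using ht)

/-- The evenness statement for any class set `C` stable under conjugation by the involutions
of `H`. -/
lemma even_ncard_of_conj_stable (h3 : Fintype.card K % 4 = 3) {p r : Pt K}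
    (hp : Internal K p) (hline : PassantThru K p r) (C : Set (Matrix (Fin 3) (Fin 3) K))
    (hC : ∀ R ∈ Hset K, R * R = 1 → ∀ M ∈ Hset K, M ∈ C → R * M * R ∈ C) :
    Even ((Uset K p ({u | Internal K u} \ NbhdSet K r) ∩ C).ncard) := by
  obtain ⟨ℓ, hpl, hrl, hℓ⟩ := hline
  rw [OnL_iff] at hpl hrl
  have hℓ' : Nonsq K (disc K ℓ.rep) := hℓ
  obtain ⟨t, ht, htt⟩ := exists_sq_eq_neg h3 hℓ'
  have hRH := halfTurn_mem ht htt
  have hRR := halfTurn_mul_self ht htt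
  have hRl := halfTurn_mulVec ht htt
  have hpR := vecMul_halfTurn ht htt hpl
  have hrR := vecMul_halfTurn ht htt hrl
  set R := halfTurn K ℓ.rep t
  have hinv : ∀ M, R * (R * M * R) * R = M := fun M => by
    calc R * (R * M * R) * R = (R * R) * M * (R * R) := by simp only [Matrix.mul_assoc]
      _ = M := by simp [hRR]
  refine even_ncard_of_involution (Set.toFinite _) (fun M => R * M * R) ?_ (fun M _ => hinv M) ?_
  · rintro M ⟨⟨hM, hMW⟩, hMC⟩
    have hM' := Hset_mul (Hset_mul hRH hM) hRH
    refine ⟨⟨hM', ?_⟩, hC R hRH hRR M hM hMC⟩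
    rw [actPt_mem_iff h3 hM' hp]
    rw [actPt_mem_iff h3 hM hp] at hMW
    -- A passant `l` through `r` and `p^(R M R)` yields the passant `R l` through `r` and `p^M`.
    rintro ⟨l, h1, h2, h4⟩
    refine hMW ⟨R *ᵥ l, by rwa [disc_mulVec hRH], ?_, ?_⟩
    · rw [dotProduct_mulVec, hrR, neg_dotProduct, h2, neg_zero]
    · rw [← vecMul_vecMul, ← vecMul_vecMul, hpR, neg_vecMul, neg_vecMul, neg_dotProduct,
        neg_eq_zero] at h4
      rw [dotProduct_mulVec, h4]
  · rintro M ⟨⟨hM, hMW⟩, -⟩ hfix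
    rw [actPt_mem_iff h3 hM hp] at hMW
    have hcomm : R * M = M * R := by
      calc R * M = R * M * (R * R) := by rw [hRR, mul_one]
        _ = R * M * R * R := by rw [← Matrix.mul_assoc]
        _ = M * R := by rw [show R * M * R = M from hfix]
    refine hMW ⟨ℓ.rep, hℓ', hrl, ?_⟩
    have h1 : (p.rep ᵥ* M) ᵥ* R = -(p.rep ᵥ* M) := by
      rw [vecMul_vecMul, ← hcomm, ← vecMul_vecMul, hpR, neg_vecMul]
    have h2 : (p.rep ᵥ* M) ⬝ᵥ ℓ.rep = -((p.rep ᵥ* M) ⬝ᵥ ℓ.rep) := by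
      conv_lhs => rw [← hRl, dotProduct_mulVec, h1, neg_dotProduct]
    have hchar : ringChar K ≠ 2 := by
      intro hc
      have := FiniteField.even_card_of_char_two hc
      omega
    exact (Ring.eq_self_iff_eq_zero_of_char_ne_two hchar).mp h2.symm

lemma trace_conj {R M : Matrix (Fin 3) (Fin 3) K} (hRR : R * R = 1) :
    Matrix.trace (R * M * R) = Matrix.trace M := by
  rw [Matrix.trace_mul_comm, ← Matrix.mul_assoc, hRR, one_mul]

variable (K)

/-- `q ≡ 3 (mod 4)`, `p ≠ r` internal, line `pr` a passant:
`|U_{p,I∖N(r)} ∩ C|` is even for `C = {1}`, `[4]`, every `[θ]`, and every `[π]`. -/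
theorem Upr_parity_passant_three (h3 : Fintype.card K % 4 = 3) (p r : Pt K)
    (hp : Internal K p) (hr : Internal K r) (hne : p ≠ r)
    (hline : PassantThru K p r) :
    Even ((Uset K p ({u | Internal K u} \ NbhdSet K r) ∩ {1}).ncard) ∧
    Even ((Uset K p ({u | Internal K u} \ NbhdSet K r) ∩ class4 K).ncard) ∧
    (∀ θ : K, θ ≠ 0 → IsSquare θ → θ ≠ 4 → θ - 4 ≠ 0 → IsSquare (θ - 4) →
      Even ((Uset K p ({u | Internal K u} \ NbhdSet K r) ∩ classOf K θ).ncard)) ∧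
    (∀ π : K, π ≠ 0 → IsSquare π → π ≠ 4 → Nonsq K (π - 4) →
      Even ((Uset K p ({u | Internal K u} \ NbhdSet K r) ∩ classOf K π).ncard)) := by
  have key := fun C => even_ncard_of_conj_stable h3 hp hline C
  have hclass : ∀ s : K,
      Even ((Uset K p ({u | Internal K u} \ NbhdSet K r) ∩ classOf K s).ncard) := fun s =>
    key _ fun R hR hRR M hM hMC => ⟨Hset_mul (Hset_mul hR hM) hR, by
      rw [trace_conj hRR]; exact hMC.2⟩
  refine ⟨key _ ?_, key _ ?_, fun θ _ _ _ _ _ => hclass θ, fun π _ _ _ _ => hclass π⟩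
  · rintro R - hRR M - rfl
    simpa using hRR
  · rintro R hR hRR M hM ⟨-, hM4, hM1⟩
    refine ⟨Hset_mul (Hset_mul hR hM) hR, by rw [trace_conj hRR]; exact hM4, fun h => hM1 ?_⟩
    calc M = (R * R) * M * (R * R) := by simp [hRR]
      _ = R * (R * M * R) * R := by simp only [Matrix.mul_assoc]
      _ = 1 := by rw [h, mul_one, hRR]

end ConicPaper
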